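/- Let b ≥ 2 be an integer and let a = (a_j)_{j≥1} be any nondecreasing sequence of real weights. Then there do not exist constants A, C, c > 0 such that e(n, s, W_{s,a}) ≤ C·exp(A·s)·exp(−c·(log n)²) holds for all s, n ∈ ℕ. -/

import Mathlib

open MeasureTheory Matrix Filter
open scoped ENNReal BigOperators Topology

noncomputable section

/-- The `b`-adic digit of `k : ℕ` at place `b^i` (i.e. the `(i+1)`-st digit). -/
def natDigit (b k i : ℕ) : ℕ := k / b ^ i % b

/-- The `(i+1)`-st `b`-adic digit of a real number `x ∈ [0,1)`
(using the expansion in which infinitely many digits differ from `b-1`). -/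
def realDigit (b : ℕ) (x : ℝ) (i : ℕ) : ℕ := (⌊x * (b : ℝ) ^ (i + 1)⌋ % (b : ℤ)).toNat

/-- The `k`-th one-dimensional `b`-adic Walsh function. -/
def wal1 (b k : ℕ) (x : ℝ) : ℂ :=
  Complex.exp (2 * Real.pi * Complex.I / (b : ℂ) *
    ((∑ i ∈ Finset.range k, natDigit b k i * realDigit b x i : ℕ) : ℂ))

/-- The `k`-th `s`-dimensional `b`-adic Walsh function. -/
def wal (b : ℕ) {s : ℕ} (k : Fin s → ℕ) (x : Fin s → ℝ) : ℂ :=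
  ∏ j, wal1 b (k j) (x j)

/-- The unit cube `[0,1)^s`. -/
def unitCube (s : ℕ) : Set (Fin s → ℝ) := Set.univ.pi fun _ => Set.Ico (0 : ℝ) 1

/-- The `k`-th Walsh coefficient of `f`. -/
def walshCoeff (b : ℕ) {s : ℕ} (f : (Fin s → ℝ) → ℝ) (k : Fin s → ℕ) : ℂ :=
  ∫ x in unitCube s, (f x : ℂ) * (starRingEnd ℂ) (wal b k x)

/-- The generalized Dick weight `μ_a(k)`, one-dimensional case. -/
def dickWt (b : ℕ) (a : ℝ) (k : ℕ) : ℝ :=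
  ∑ i ∈ Finset.range k, if natDigit b k i ≠ 0 then ((i : ℝ) + 1 + a) else 0

/-- The generalized Dick weight `μ_a(k)` for vectors. -/
def dickWtV (b : ℕ) {s : ℕ} (a : Fin s → ℝ) (k : Fin s → ℕ) : ℝ :=
  ∑ j, dickWt b (a j) (k j)

/-- The modified Dick weight `μ'_a(k)`, one-dimensional case. -/
def mdickWt (b : ℕ) (a : ℝ) (k : ℕ) : ℝ :=
  ∑ i ∈ Finset.range k, if natDigit b k i ≠ 0 then max ((i : ℝ) + 1 + a) 1 else 0

/-- The modified Dick weight `μ'_a(k)` for vectors. -/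
def mdickWtV (b : ℕ) {s : ℕ} (a : Fin s → ℝ) (k : Fin s → ℕ) : ℝ :=
  ∑ j, mdickWt b (a j) (k j)

/-- Digitwise subtraction modulo `b` of natural numbers. -/
def dsub (b k k' : ℕ) : ℕ :=
  ∑ i ∈ Finset.range (k + k' + 1), ((natDigit b k i + (b - natDigit b k' i)) % b) * b ^ i

/-- The integral of `f` over the unit cube. -/
def intBox (s : ℕ) (f : (Fin s → ℝ) → ℝ) : ℝ := ∫ x in unitCube s, f x

/-- Membership in the Walsh space `W_{s,a}`: `f` equals its (convergent) Walsh series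
and has finite norm. -/
def MemW (b : ℕ) {s : ℕ} (a : Fin s → ℝ) (f : (Fin s → ℝ) → ℝ) : Prop :=
  (∀ x ∈ unitCube s, HasSum (fun k : Fin s → ℕ => walshCoeff b f k * wal b k x) ((f x : ℂ))) ∧
  BddAbove (Set.range fun k : Fin s → ℕ => ‖walshCoeff b f k‖ * (b : ℝ) ^ dickWtV b a k)

/-- The norm of the Walsh space `W_{s,a}`. -/
def normW (b : ℕ) {s : ℕ} (a : Fin s → ℝ) (f : (Fin s → ℝ) → ℝ) : ℝ :=
  ⨆ k : Fin s → ℕ, ‖walshCoeff b f k‖ * (b : ℝ) ^ dickWtV b a k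

/-- Membership in the modified Walsh space `W'_{s,a}`. -/
def MemW' (b : ℕ) {s : ℕ} (a : Fin s → ℝ) (f : (Fin s → ℝ) → ℝ) : Prop :=
  (∀ x ∈ unitCube s, HasSum (fun k : Fin s → ℕ => walshCoeff b f k * wal b k x) ((f x : ℂ))) ∧
  BddAbove (Set.range fun k : Fin s → ℕ => ‖walshCoeff b f k‖ * (b : ℝ) ^ mdickWtV b a k)

/-- The norm of the modified Walsh space `W'_{s,a}`. -/
def normW' (b : ℕ) {s : ℕ} (a : Fin s → ℝ) (f : (Fin s → ℝ) → ℝ) : ℝ :=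
  ⨆ k : Fin s → ℕ, ‖walshCoeff b f k‖ * (b : ℝ) ^ mdickWtV b a k

/-- The worst-case error of the algorithm `A` over the unit ball of `(H, N)`. -/
def worstErr (s : ℕ) (H : Set ((Fin s → ℝ) → ℝ)) (N : ((Fin s → ℝ) → ℝ) → ℝ)
    (A : ((Fin s → ℝ) → ℝ) → ℝ) : ℝ≥0∞ :=
  ⨆ (f : (Fin s → ℝ) → ℝ) (_ : f ∈ H) (_ : N f ≤ 1), ENNReal.ofReal |intBox s f - A f|

/-- The `n`-th minimal worst-case error over all algorithms using `n` function values
at points of the unit cube. -/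
def minErr (n s : ℕ) (H : Set ((Fin s → ℝ) → ℝ)) (N : ((Fin s → ℝ) → ℝ) → ℝ) : ℝ≥0∞ :=
  ⨅ (t : Fin n → Fin s → ℝ) (_ : ∀ i, t i ∈ unitCube s) (φ : (Fin n → ℝ) → ℝ),
    worstErr s H N fun f => φ fun i => f (t i)

/-- Partial derivative in the `j`-th coordinate. -/
def pd {s : ℕ} (j : Fin s) (f : (Fin s → ℝ) → ℝ) : (Fin s → ℝ) → ℝ :=
  fun x => deriv (fun t => f (Function.update x j t)) (x j)

/-- The mixed partial derivative `f^{(α)}`. -/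
def mpd {s : ℕ} (α : Fin s → ℕ) (f : (Fin s → ℝ) → ℝ) : (Fin s → ℝ) → ℝ :=
  (List.finRange s).foldr (fun j g => (pd j)^[α j] g) f

/-- Membership in the space `S_{s,u}` of smooth functions. -/
def MemS {s : ℕ} (u : Fin s → ℝ) (f : (Fin s → ℝ) → ℝ) : Prop :=
  ContDiff ℝ (⊤ : ℕ∞) f ∧
  BddAbove (Set.range fun α : Fin s → ℕ =>
    (∫ x in unitCube s, |mpd α f x|) / ∏ j, u j ^ α j)

/-- The norm of the space `S_{s,u}`. -/
def normS {s : ℕ} (u : Fin s → ℝ) (f : (Fin s → ℝ) → ℝ) : ℝ :=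
  ⨆ α : Fin s → ℕ, (∫ x in unitCube s, |mpd α f x|) / ∏ j, u j ^ α j

/-- The column vector of the first `m` `b`-adic digits of `k`. -/
def trunc (b m k : ℕ) : Fin m → ZMod b := fun i => (natDigit b k (i : ℕ) : ZMod b)

/-- The `m`-th point of the digital net determined by generating matrices `G`. -/
def netPoint (b : ℕ) {s l d : ℕ} (G : Fin s → Matrix (Fin l) (Fin d) (ZMod b)) (m : ℕ) :
    Fin s → ℝ :=
  fun j => ∑ i : Fin l, (((G j).mulVec (trunc b d m)) i).val / (b : ℝ) ^ ((i : ℕ) + 1)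

/-- The dual net of the digital net determined by `G`. -/
def dualNet (b : ℕ) {s l d : ℕ} (G : Fin s → Matrix (Fin l) (Fin d) (ZMod b)) :
    Set (Fin s → ℕ) :=
  {k | ∑ j, (G j)ᵀ.mulVec (trunc b l (k j)) = 0}

/-- The QMC algorithm given by the digital net with generating matrices `G`. -/
def qmcNet (b : ℕ) {s l d : ℕ} (G : Fin s → Matrix (Fin l) (Fin d) (ZMod b))
    (f : (Fin s → ℝ) → ℝ) : ℝ :=
  ((b : ℝ) ^ d)⁻¹ * ∑ m ∈ Finset.range (b ^ d), f (netPoint b G m)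

/-- `n_j = #{i ∈ ℕ : i + a ≤ 1}` (with `i` ranging over positive integers). -/
def negCount (a : ℝ) : ℕ := Set.ncard {i : ℕ | 0 < i ∧ (i : ℝ) + a ≤ 1}


/-!
The indicator of a `b`-adic box of side `b ^ (-m)` is a Walsh polynomial: only the indices
`k ∈ [0, b ^ m) ^ s` occur, each with a coefficient of modulus `b ^ (-m * s)`. If `n < b ^ (m * s)`,
then some box contains no node of the algorithm, so the algorithm cannot distinguish a multiple `f`
of its indicator from `-f`. On those indices the Dick weight is at most `s * m * (m + M)`, where `M`
bounds the weights, so scaling `f` to norm one gives `e(n, s) ≥ b ^ (-s * m * (m + M))`.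
For fixed `s` this decays like `exp (-(log n) ^ 2 / (s * log b))`, and the factor `1 / s` in the
exponent eventually falls below every `c > 0`.
-/

open scoped ComplexConjugate

section RootsOfUnity

lemma sum_range_pow_div_pow_of_isPrimitiveRoot {K : Type*} [Field K] {ζ : K} {b p q : ℕ}
    (hζ : IsPrimitiveRoot ζ b) (hp : p < b) (hq : q < b) :
    ∑ d ∈ Finset.range b, (ζ ^ p / ζ ^ q) ^ d = if p = q then (b : K) else 0 := by
  have hζ_ne : ζ ^ q ≠ 0 := pow_ne_zero q (hζ.ne_zero (by lia))
  split_ifs with hpq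
  · simp [hpq, div_self hζ_ne]
  · have ratio_ne_one : ζ ^ p / ζ ^ q ≠ 1 := fun h =>
      hpq (hζ.pow_inj hp hq ((div_eq_one_iff_eq hζ_ne).1 h))
    have ratio_pow : (ζ ^ p / ζ ^ q) ^ b = 1 := by
      rw [div_pow, pow_right_comm, pow_right_comm ζ q, hζ.pow_eq_one, one_pow, one_pow, div_one]
    rw [geom_sum_eq ratio_ne_one, ratio_pow, sub_self, zero_div]

/-- The root of unity `ω_b = exp (2πi / b)` whose powers are the values of the `b`-adic Walsh
functions. -/
def walshRoot (b : ℕ) : ℂ := Complex.exp (2 * Real.pi * Complex.I / b)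

variable {b : ℕ}

lemma isPrimitiveRoot_walshRoot (hb : b ≠ 0) : IsPrimitiveRoot (walshRoot b) b :=
  Complex.isPrimitiveRoot_exp b hb

lemma norm_walshRoot (hb : b ≠ 0) : ‖walshRoot b‖ = 1 :=
  (isPrimitiveRoot_walshRoot hb).norm'_eq_one hb

lemma sum_walshRoot_pow_mul_conj {p q : ℕ} (hp : p < b) (hq : q < b) :
    ∑ d ∈ Finset.range b, walshRoot b ^ (p * d) * conj (walshRoot b ^ (q * d)) =
      if p = q then (b : ℂ) else 0 := by
  have hb : b ≠ 0 := by lia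
  rw [← sum_range_pow_div_pow_of_isPrimitiveRoot (isPrimitiveRoot_walshRoot hb) hp hq]
  refine Finset.sum_congr rfl fun d _ => ?_
  rw [← Complex.inv_eq_conj (by simp [norm_walshRoot hb]), div_pow, ← pow_mul, ← pow_mul,
    div_eq_mul_inv]

end RootsOfUnity

section Digits

variable {b : ℕ}

lemma natDigit_eq_zero_of_lt_pow {k i : ℕ} (h : k < b ^ i) : natDigit b k i = 0 := by
  simp [natDigit, Nat.div_eq_of_lt h]

lemma natDigit_add_mul_zero {d : ℕ} (hd : d < b) (k : ℕ) : natDigit b (d + b * k) 0 = d := by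
  simp [natDigit, Nat.mod_eq_of_lt hd]

lemma natDigit_add_mul_succ {d : ℕ} (hd : d < b) (k i : ℕ) :
    natDigit b (d + b * k) (i + 1) = natDigit b k i := by
  rw [natDigit, natDigit, pow_succ', ← Nat.div_div_eq_div_mul, Nat.add_mul_div_left _ _ (by lia),
    Nat.div_eq_of_lt hd, zero_add]

lemma realDigit_add_div_zero {d : ℕ} (hd : d < b) {u : ℝ} (hu : u ∈ Set.Ico (0 : ℝ) 1) :
    realDigit b ((u + d) / b) 0 = d := by
  have hb : (b : ℝ) ≠ 0 := by norm_cast; lia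
  have floor_u : ⌊u⌋ = 0 := Int.floor_eq_zero_iff.2 hu
  rw [realDigit, zero_add, pow_one, div_mul_cancel₀ _ hb, Int.floor_add_natCast, floor_u, zero_add,
    Int.emod_eq_of_lt (by lia) (by lia), Int.toNat_natCast]

lemma realDigit_add_div_succ (hb : b ≠ 0) (d i : ℕ) (u : ℝ) :
    realDigit b ((u + d) / b) (i + 1) = realDigit b u i := by
  have shift : (u + d) / b * (b : ℝ) ^ (i + 1 + 1) =
      u * (b : ℝ) ^ (i + 1) + (((b : ℤ) * (d * (b : ℤ) ^ i) : ℤ) : ℝ) := by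
    push_cast; field_simp; ring
  rw [realDigit, realDigit, shift, Int.floor_add_intCast, Int.add_mul_emod_self_left]

lemma exists_eq_add_div_of_mem_Ico (hb : b ≠ 0) {x : ℝ} (hx : x ∈ Set.Ico (0 : ℝ) 1) :
    ∃ d < b, ∃ u ∈ Set.Ico (0 : ℝ) 1, x = (u + d) / b := by
  have hb_pos : (0 : ℝ) < b := by positivity
  have hxb : 0 ≤ x * b := mul_nonneg hx.1 hb_pos.le
  refine ⟨⌊x * b⌋₊, (Nat.floor_lt hxb).2 (mul_lt_of_lt_one_left hb_pos hx.2),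
    x * b - ⌊x * b⌋₊, ⟨?_, ?_⟩, ?_⟩
  · exact sub_nonneg.2 (Nat.floor_le hxb)
  · linarith [Nat.lt_floor_add_one (x * b)]
  · rw [sub_add_cancel, mul_div_cancel_right₀ _ hb_pos.ne']

lemma sum_range_mul_eq_sum_sum {M : Type*} [AddCommMonoid M] (b N : ℕ) (F : ℕ → M) :
    ∑ k ∈ Finset.range (b * N), F k =
      ∑ k ∈ Finset.range N, ∑ d ∈ Finset.range b, F (d + b * k) := by
  induction N with
  | zero => simp
  | succ N ih =>
    rw [Nat.mul_succ, Finset.sum_range_add, ih, Finset.sum_range_succ]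
    simp only [add_comm]

end Digits

section UnivariateWalsh

variable {b : ℕ}

lemma wal1_eq_walshRoot_pow (hb : 1 < b) {k N : ℕ} (hkN : k ≤ N) (x : ℝ) :
    wal1 b k x =
      walshRoot b ^ ∑ i ∈ Finset.range N, natDigit b k i * realDigit b x i := by
  have sum_eq : ∑ i ∈ Finset.range k, natDigit b k i * realDigit b x i =
      ∑ i ∈ Finset.range N, natDigit b k i * realDigit b x i := by
    refine Finset.sum_subset (Finset.range_subset_range.2 hkN) fun i _ hi => ?_
    have hki : k ≤ i := by simpa using hi
    rw [natDigit_eq_zero_of_lt_pow (hki.trans_lt (Nat.lt_pow_self hb)), zero_mul]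
  rw [wal1, sum_eq, walshRoot, ← Complex.exp_nat_mul, mul_comm]

lemma wal1_zero (b : ℕ) (x : ℝ) : wal1 b 0 x = 1 := by simp [wal1]

lemma norm_wal1 (hb : 1 < b) (k : ℕ) (x : ℝ) : ‖wal1 b k x‖ = 1 := by
  rw [wal1_eq_walshRoot_pow hb le_rfl, norm_pow, norm_walshRoot (by lia), one_pow]

lemma measurable_realDigit (b i : ℕ) : Measurable fun x => realDigit b x i :=
  (measurable_from_top (f := fun z : ℤ => (z % (b : ℤ)).toNat)).comp
    (Int.measurable_floor.comp (measurable_id.mul_const _))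

lemma measurable_wal1 (b k : ℕ) : Measurable (wal1 b k) := by
  have measurable_exponent : Measurable fun x : ℝ =>
      ∑ i ∈ Finset.range k, natDigit b k i * realDigit b x i :=
    Finset.measurable_sum _ fun i _ => (measurable_realDigit b i).const_mul _
  exact Complex.measurable_exp.comp
    (((measurable_from_top (f := fun z : ℕ => (z : ℂ))).comp measurable_exponent).const_mul _)

lemma integrableOn_wal1_mul_conj_wal1 (hb : 1 < b) (k l : ℕ) :
    IntegrableOn (fun x => wal1 b k x * conj (wal1 b l x)) (Set.Ico 0 1) := by
  refine Measure.integrableOn_of_bounded (M := 1) (by simp) ?_ (by simp [norm_wal1 hb])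
  exact ((measurable_wal1 b k).mul
    (Complex.continuous_conj.measurable.comp (measurable_wal1 b l))).aestronglyMeasurable

lemma wal1_add_mul_add_div (hb : 1 < b) {k₀ d : ℕ} (hk₀ : k₀ < b) (hd : d < b) (k : ℕ) {u : ℝ}
    (hu : u ∈ Set.Ico (0 : ℝ) 1) :
    wal1 b (k₀ + b * k) ((u + d) / b) = walshRoot b ^ (k₀ * d) * wal1 b k u := by
  have hk : k ≤ k₀ + b * k := (Nat.le_mul_of_pos_left k (by lia)).trans (Nat.le_add_left _ _)
  rw [wal1_eq_walshRoot_pow hb (Nat.le_succ _), wal1_eq_walshRoot_pow hb hk u,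
    Finset.sum_range_succ', ← pow_add, natDigit_add_mul_zero hk₀, realDigit_add_div_zero hd hu,
    add_comm]
  simp only [natDigit_add_mul_succ hk₀, realDigit_add_div_succ (by lia : b ≠ 0)]

lemma setIntegral_Ico_eq_smul_sum_add_div {E : Type*} [NormedAddCommGroup E] [NormedSpace ℝ E]
    (hb : b ≠ 0) {g : ℝ → E} (hg : IntegrableOn g (Set.Ico 0 1)) :
    ∫ x in Set.Ico (0 : ℝ) 1, g x =
      (b : ℝ)⁻¹ • ∑ d ∈ Finset.range b, ∫ u in Set.Ico (0 : ℝ) 1, g ((u + d) / b) := by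
  have hb_ne : (b : ℝ) ≠ 0 := by positivity
  have setIntegral_eq (h : ℝ → E) : ∫ x in Set.Ico (0 : ℝ) 1, h x = ∫ x in (0 : ℝ)..1, h x := by
    rw [intervalIntegral.integral_of_le zero_le_one, integral_Ico_eq_integral_Ioc]
  have integrable_piece (d : ℕ) (hd : d < b) :
      IntervalIntegrable g volume ((d : ℝ) / b) ((d + 1 : ℕ) / b) := by
    rw [intervalIntegrable_iff_integrableOn_Ico_of_le (by gcongr; simp)]
    refine hg.mono_set (Set.Ico_subset_Ico (by positivity) (div_le_one_of_le₀ ?_ (by positivity)))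
    exact_mod_cast hd
  have sum_pieces := intervalIntegral.sum_integral_adjacent_intervals integrable_piece
  simp only [Nat.cast_zero, zero_div, div_self hb_ne] at sum_pieces
  simp only [setIntegral_eq, ← sum_pieces, Finset.smul_sum, add_div]
  refine Finset.sum_congr rfl fun d _ => ?_
  rw [intervalIntegral.integral_comp_div_add g hb_ne, inv_smul_smul₀ hb_ne, zero_div, zero_add,
    Nat.cast_succ, add_div, add_comm]

lemma integral_wal1_mul_conj_wal1_add_mul (hb : 1 < b) {k₀ l₀ : ℕ} (hk₀ : k₀ < b) (hl₀ : l₀ < b)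
    (k l : ℕ) :
    ∫ x in Set.Ico (0 : ℝ) 1, wal1 b (k₀ + b * k) x * conj (wal1 b (l₀ + b * l) x) =
      if k₀ = l₀ then ∫ x in Set.Ico (0 : ℝ) 1, wal1 b k x * conj (wal1 b l x) else 0 := by
  have integral_piece (d : ℕ) (hd : d ∈ Finset.range b) :
      ∫ u in Set.Ico (0 : ℝ) 1, wal1 b (k₀ + b * k) ((u + d) / b) *
          conj (wal1 b (l₀ + b * l) ((u + d) / b)) =
        walshRoot b ^ (k₀ * d) * conj (walshRoot b ^ (l₀ * d)) *
          ∫ u in Set.Ico (0 : ℝ) 1, wal1 b k u * conj (wal1 b l u) := by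
    rw [← integral_const_mul]
    refine setIntegral_congr_fun measurableSet_Ico fun u hu => ?_
    have hd := Finset.mem_range.1 hd
    simp only [wal1_add_mul_add_div hb hk₀ hd k hu, wal1_add_mul_add_div hb hl₀ hd l hu, map_mul]
    ring
  rw [setIntegral_Ico_eq_smul_sum_add_div (by lia : b ≠ 0)
      (integrableOn_wal1_mul_conj_wal1 hb _ _), Finset.sum_congr rfl integral_piece,
    ← Finset.sum_mul, sum_walshRoot_pow_mul_conj hk₀ hl₀]
  have hb_ne : (b : ℂ) ≠ 0 := by norm_cast; lia
  split_ifs <;> simp [hb_ne]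

lemma integral_wal1_mul_conj_wal1_of_lt_pow (hb : 1 < b) {m k l : ℕ} (hk : k < b ^ m)
    (hl : l < b ^ m) :
    ∫ x in Set.Ico (0 : ℝ) 1, wal1 b k x * conj (wal1 b l x) = if k = l then 1 else 0 := by
  induction m generalizing k l with
  | zero =>
    obtain ⟨rfl, rfl⟩ : k = 0 ∧ l = 0 := by simpa using And.intro hk hl
    simp [wal1_zero]
  | succ m ih =>
    have digit_lt (j : ℕ) : j % b < b := Nat.mod_lt _ (by lia)
    have eq_iff : k = l ↔ k % b = l % b ∧ k / b = l / b := by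
      rw [and_comm, Nat.ext_div_mod_iff b]
    rw [← Nat.mod_add_div k b, ← Nat.mod_add_div l b,
      integral_wal1_mul_conj_wal1_add_mul hb (digit_lt k) (digit_lt l),
      ih (Nat.div_lt_of_lt_mul (pow_succ' b m ▸ hk)) (Nat.div_lt_of_lt_mul (pow_succ' b m ▸ hl)),
      Nat.mod_add_div, Nat.mod_add_div, ← ite_and]
    simp only [eq_iff]

lemma integral_wal1_mul_conj_wal1 (hb : 1 < b) (k l : ℕ) :
    ∫ x in Set.Ico (0 : ℝ) 1, wal1 b k x * conj (wal1 b l x) = if k = l then 1 else 0 :=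
  integral_wal1_mul_conj_wal1_of_lt_pow hb (m := max k l)
    ((le_max_left k l).trans_lt (Nat.lt_pow_self hb))
    ((le_max_right k l).trans_lt (Nat.lt_pow_self hb))

end UnivariateWalsh

section Cells

/-- The index `c` of the `b`-adic cell `[c / b ^ m, (c + 1) / b ^ m)` of level `m` that contains
`x`, for `x ∈ [0, 1)`. -/
def cellIndex (b m : ℕ) (x : ℝ) : ℕ := ⌊x * (b : ℝ) ^ m⌋₊

/-- The indicator function, evaluated at `y`, of the level-`m` cell around `x`. -/
def cellIndicator (b m : ℕ) (x y : ℝ) : ℝ :=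
  if cellIndex b m x = cellIndex b m y then 1 else 0

variable {b : ℕ}

lemma cellIndex_lt (hb : b ≠ 0) (m : ℕ) {x : ℝ} (hx : x ∈ Set.Ico (0 : ℝ) 1) :
    cellIndex b m x < b ^ m := by
  have hbm : (0 : ℝ) < (b : ℝ) ^ m := by positivity
  rw [cellIndex, Nat.floor_lt (mul_nonneg hx.1 hbm.le)]
  exact_mod_cast mul_lt_of_lt_one_left hbm hx.2

lemma cellIndex_natCast_div (hb : b ≠ 0) (m c : ℕ) : cellIndex b m (c / (b : ℝ) ^ m) = c := by
  rw [cellIndex, div_mul_cancel₀ _ (by positivity), Nat.floor_natCast]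

lemma cellIndex_add_div (hb : b ≠ 0) (m d : ℕ) {u : ℝ} (hu : 0 ≤ u) :
    cellIndex b (m + 1) ((u + d) / b) = cellIndex b m u + d * b ^ m := by
  have shift : (u + d) / b * (b : ℝ) ^ (m + 1) = u * (b : ℝ) ^ m + (d * b ^ m : ℕ) := by
    push_cast; field_simp; ring
  rw [cellIndex, shift, Nat.floor_add_natCast (by positivity), cellIndex]

lemma cellIndex_add_div_eq_iff (hb : b ≠ 0) (m d e : ℕ) {u v : ℝ} (hu : u ∈ Set.Ico (0 : ℝ) 1)
    (hv : v ∈ Set.Ico (0 : ℝ) 1) :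
    cellIndex b (m + 1) ((u + d) / b) = cellIndex b (m + 1) ((v + e) / b) ↔
      d = e ∧ cellIndex b m u = cellIndex b m v := by
  have hbm : 0 < b ^ m := by positivity
  rw [cellIndex_add_div hb m d hu.1, cellIndex_add_div hb m e hv.1]
  refine ⟨fun h => ?_, by rintro ⟨rfl, h⟩; rw [h]⟩
  have digit_eq : d = e := by
    have := congrArg (· / b ^ m) h
    simpa only [Nat.add_mul_div_right _ _ hbm, Nat.div_eq_of_lt (cellIndex_lt hb m hu),
      Nat.div_eq_of_lt (cellIndex_lt hb m hv), zero_add] using this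
  exact ⟨digit_eq, by rwa [digit_eq, Nat.add_right_cancel_iff] at h⟩

lemma cellIndicator_add_div (hb : b ≠ 0) (m d e : ℕ) {u v : ℝ} (hu : u ∈ Set.Ico (0 : ℝ) 1)
    (hv : v ∈ Set.Ico (0 : ℝ) 1) :
    cellIndicator b (m + 1) ((u + d) / b) ((v + e) / b) =
      if d = e then cellIndicator b m u v else 0 := by
  simp only [cellIndicator, cellIndex_add_div_eq_iff hb m d e hu hv, ite_and]

/-- The Walsh analogue of the Dirichlet kernel. -/
lemma sum_wal1_mul_conj_wal1 (hb : 1 < b) (m : ℕ) {x y : ℝ} (hx : x ∈ Set.Ico (0 : ℝ) 1)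
    (hy : y ∈ Set.Ico (0 : ℝ) 1) :
    ∑ k ∈ Finset.range (b ^ m), wal1 b k y * conj (wal1 b k x) =
      (b : ℂ) ^ m * cellIndicator b m x y := by
  induction m generalizing x y with
  | zero => simp [wal1_zero, cellIndicator, cellIndex, Nat.floor_eq_zero.2 hx.2,
      Nat.floor_eq_zero.2 hy.2]
  | succ m ih =>
    obtain ⟨d, hd, u, hu, rfl⟩ := exists_eq_add_div_of_mem_Ico (by lia : b ≠ 0) hx
    obtain ⟨e, he, v, hv, rfl⟩ := exists_eq_add_div_of_mem_Ico (by lia : b ≠ 0) hy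
    have sum_last_digit (k : ℕ) :
        ∑ k₀ ∈ Finset.range b, wal1 b (k₀ + b * k) ((v + e) / b) *
            conj (wal1 b (k₀ + b * k) ((u + d) / b)) =
          (if e = d then (b : ℂ) else 0) * (wal1 b k v * conj (wal1 b k u)) := by
      rw [← sum_walshRoot_pow_mul_conj he hd, Finset.sum_mul]
      refine Finset.sum_congr rfl fun k₀ hk₀ => ?_
      have hk₀ := Finset.mem_range.1 hk₀
      rw [wal1_add_mul_add_div hb hk₀ he k hv, wal1_add_mul_add_div hb hk₀ hd k hu, map_mul,
        mul_comm e, mul_comm d]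
      ring
    rw [pow_succ' b, sum_range_mul_eq_sum_sum, Finset.sum_congr rfl fun k _ => sum_last_digit k,
      ← Finset.mul_sum, ih hu hv, cellIndicator_add_div (by lia) m d e hu hv, pow_succ']
    by_cases hde : d = e
    · simp [hde, mul_assoc]
    · simp [hde, Ne.symm hde]

lemma cellIndicator_eq_sum (hb : 1 < b) (m : ℕ) {x y : ℝ} (hx : x ∈ Set.Ico (0 : ℝ) 1)
    (hy : y ∈ Set.Ico (0 : ℝ) 1) :
    (cellIndicator b m x y : ℂ) =
      ∑ k ∈ Finset.range (b ^ m), ((b : ℂ) ^ m)⁻¹ * conj (wal1 b k x) * wal1 b k y := by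
  have hbm : (b : ℂ) ^ m ≠ 0 := pow_ne_zero m (by norm_cast; lia)
  simp only [mul_assoc, mul_comm (conj _)]
  rw [← Finset.mul_sum, sum_wal1_mul_conj_wal1 hb m hx hy, inv_mul_cancel_left₀ hbm]

lemma integral_cellIndicator_mul_conj_wal1 (hb : 1 < b) (m : ℕ) {x : ℝ}
    (hx : x ∈ Set.Ico (0 : ℝ) 1) (k : ℕ) :
    ∫ y in Set.Ico (0 : ℝ) 1, (cellIndicator b m x y : ℂ) * conj (wal1 b k y) =
      if k < b ^ m then ((b : ℂ) ^ m)⁻¹ * conj (wal1 b k x) else 0 := by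
  calc ∫ y in Set.Ico (0 : ℝ) 1, (cellIndicator b m x y : ℂ) * conj (wal1 b k y)
      = ∫ y in Set.Ico (0 : ℝ) 1, ∑ l ∈ Finset.range (b ^ m),
          ((b : ℂ) ^ m)⁻¹ * conj (wal1 b l x) * (wal1 b l y * conj (wal1 b k y)) := by
        refine setIntegral_congr_fun measurableSet_Ico fun y hy => ?_
        simp only [cellIndicator_eq_sum hb m hx hy, Finset.sum_mul, mul_assoc]
    _ = ∑ l ∈ Finset.range (b ^ m),
          ((b : ℂ) ^ m)⁻¹ * conj (wal1 b l x) * if l = k then 1 else 0 := by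
        rw [integral_finsetSum _ fun l _ => (integrableOn_wal1_mul_conj_wal1 hb l k).const_mul _]
        simp only [integral_const_mul, integral_wal1_mul_conj_wal1 hb]
    _ = _ := by simp

end Cells

section WalshSpace

variable {b s : ℕ}

lemma norm_wal (hb : 1 < b) (k : Fin s → ℕ) (x : Fin s → ℝ) : ‖wal b k x‖ = 1 := by
  simp [wal, norm_wal1 hb]

lemma walshCoeff_zero (b : ℕ) (f : (Fin s → ℝ) → ℝ) : walshCoeff b f 0 = intBox s f := by
  simp only [walshCoeff, wal, Pi.zero_apply, wal1_zero, Finset.prod_const_one, map_one, mul_one,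
    integral_complex_ofReal, intBox]

lemma walshCoeff_smul (b : ℕ) (r : ℝ) (f : (Fin s → ℝ) → ℝ) (k : Fin s → ℕ) :
    walshCoeff b (r • f) k = r * walshCoeff b f k := by
  simp only [walshCoeff, Pi.smul_apply, smul_eq_mul, Complex.ofReal_mul, mul_assoc,
    integral_const_mul]

lemma walshCoeff_prod (b : ℕ) (g : Fin s → ℝ → ℝ) (k : Fin s → ℕ) :
    walshCoeff b (fun y => ∏ j, g j (y j)) k =
      ∏ j, ∫ y in Set.Ico (0 : ℝ) 1, (g j y : ℂ) * conj (wal1 b (k j) y) := by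
  simp only [walshCoeff, wal, map_prod, Complex.ofReal_prod, ← Finset.prod_mul_distrib]
  rw [unitCube, volume_pi, Measure.restrict_pi_pi, integral_fintype_prod_eq_prod
    (fun (j : Fin s) (y : ℝ) => (g j y : ℂ) * conj (wal1 b (k j) y))]

lemma norm_walshCoeff_smul_mul_rpow (b : ℕ) (a : Fin s → ℝ) (r : ℝ) (f : (Fin s → ℝ) → ℝ)
    (k : Fin s → ℕ) :
    ‖walshCoeff b (r • f) k‖ * (b : ℝ) ^ dickWtV b a k =
      |r| * (‖walshCoeff b f k‖ * (b : ℝ) ^ dickWtV b a k) := by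
  rw [walshCoeff_smul, norm_mul, Complex.norm_real, Real.norm_eq_abs, mul_assoc]

lemma MemW.smul {a : Fin s → ℝ} {f : (Fin s → ℝ) → ℝ} (hf : MemW b a f) (r : ℝ) :
    MemW b a (r • f) := by
  refine ⟨fun x hx => ?_, ?_⟩
  · simpa only [walshCoeff_smul, Pi.smul_apply, smul_eq_mul, Complex.ofReal_mul, mul_assoc]
      using (hf.1 x hx).mul_left (r : ℂ)
  · obtain ⟨B, hB⟩ := hf.2
    refine ⟨|r| * B, Set.forall_mem_range.2 fun k => ?_⟩
    rw [norm_walshCoeff_smul_mul_rpow]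
    exact mul_le_mul_of_nonneg_left (hB ⟨k, rfl⟩) (abs_nonneg r)

lemma normW_smul (b : ℕ) (a : Fin s → ℝ) (r : ℝ) (f : (Fin s → ℝ) → ℝ) :
    normW b a (r • f) = |r| * normW b a f := by
  simp only [normW, norm_walshCoeff_smul_mul_rpow, Real.mul_iSup_of_nonneg (abs_nonneg r)]

lemma intBox_smul (r : ℝ) (f : (Fin s → ℝ) → ℝ) : intBox s (r • f) = r * intBox s f :=
  integral_const_mul r f

end WalshSpace

section FoolingFunctions

variable {n s : ℕ} {H : Set ((Fin s → ℝ) → ℝ)} {N : ((Fin s → ℝ) → ℝ) → ℝ}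

lemma ofReal_abs_intBox_sub_le_worstErr {f : (Fin s → ℝ) → ℝ} (hf : f ∈ H) (hNf : N f ≤ 1)
    (A : ((Fin s → ℝ) → ℝ) → ℝ) : ENNReal.ofReal |intBox s f - A f| ≤ worstErr s H N A :=
  le_iSup₂_of_le f hf (le_iSup_of_le hNf le_rfl)

lemma ofReal_le_minErr_of_vanishing {ε : ℝ} (hH : ∀ f ∈ H, -f ∈ H) (hN : ∀ f ∈ H, N (-f) = N f)
    (hfool : ∀ t : Fin n → Fin s → ℝ, (∀ i, t i ∈ unitCube s) →
      ∃ f ∈ H, N f ≤ 1 ∧ (∀ i, f (t i) = 0) ∧ ε ≤ intBox s f) :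
    ENNReal.ofReal ε ≤ minErr n s H N := by
  refine le_iInf₂ fun t ht => le_iInf fun φ => ?_
  obtain ⟨f, hf, hNf, hft, hε⟩ := hfool t ht
  have intBox_neg : intBox s (-f) = -intBox s f := integral_neg f
  -- The algorithm returns the same value `φ 0` on `f` and on `-f`.
  have err_pos := ofReal_abs_intBox_sub_le_worstErr hf hNf fun f => φ fun i => f (t i)
  have err_neg := ofReal_abs_intBox_sub_le_worstErr (hH f hf) ((hN f hf).trans_le hNf)
    fun f => φ fun i => f (t i)
  simp only [Pi.neg_apply, hft, neg_zero, intBox_neg] at err_pos err_neg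
  rcases le_total (φ fun _ => 0) 0 with hφ | hφ
  · refine (ENNReal.ofReal_le_ofReal ?_).trans err_pos
    linarith [le_abs_self (intBox s f - φ fun _ => 0)]
  · refine (ENNReal.ofReal_le_ofReal ?_).trans err_neg
    linarith [neg_le_abs (-intBox s f - φ fun _ => 0)]

end FoolingFunctions

section DickWeight

lemma exists_nonneg_forall_le {ι : Type*} [Finite ι] (a : ι → ℝ) :
    ∃ M : ℝ, 0 ≤ M ∧ ∀ j, a j ≤ M := by
  obtain ⟨M, hM⟩ := Finite.bddAbove_range a
  exact ⟨max M 0, le_max_right _ _, fun j => (hM ⟨j, rfl⟩).trans (le_max_left _ _)⟩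

variable {b m : ℕ}

lemma dickWt_le (hb : b ≠ 0) {a M : ℝ} (haM : a ≤ M) (hM : 0 ≤ M) {k : ℕ} (hk : k < b ^ m) :
    dickWt b a k ≤ m * (m + M) := by
  have lt_of_digit_ne_zero {i : ℕ} (hi : natDigit b k i ≠ 0) : i < m := by
    contrapose! hi
    exact natDigit_eq_zero_of_lt_pow (hk.trans_le (Nat.pow_le_pow_right (by lia) hi))
  calc dickWt b a k
      = ∑ i ∈ Finset.range k with natDigit b k i ≠ 0, ((i : ℝ) + 1 + a) := by
        rw [dickWt, Finset.sum_filter]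
    _ ≤ ∑ i ∈ Finset.range k with natDigit b k i ≠ 0, ((m : ℝ) + M) := by
        refine Finset.sum_le_sum fun i hi => add_le_add ?_ haM
        exact_mod_cast lt_of_digit_ne_zero (Finset.mem_filter.1 hi).2
    _ ≤ ∑ _i ∈ Finset.range m, ((m : ℝ) + M) := by
        refine Finset.sum_le_sum_of_subset_of_nonneg (fun i hi => ?_) fun _ _ _ => by positivity
        exact Finset.mem_range.2 (lt_of_digit_ne_zero (Finset.mem_filter.1 hi).2)
    _ = m * (m + M) := by rw [Finset.sum_const, Finset.card_range, nsmul_eq_mul]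

lemma dickWtV_le (hb : b ≠ 0) {s : ℕ} {a : Fin s → ℝ} {M : ℝ} (haM : ∀ j, a j ≤ M) (hM : 0 ≤ M)
    {k : Fin s → ℕ} (hk : ∀ j, k j < b ^ m) : dickWtV b a k ≤ s * (m * (m + M)) :=
  (Finset.sum_le_sum fun j _ => dickWt_le hb (haM j) hM (hk j)).trans_eq (by simp)

end DickWeight

section Boxes

/-- The indicator function, evaluated at `y`, of the `b`-adic box of side `b ^ (-m)` around `x`. -/
def boxIndicator (b m : ℕ) {s : ℕ} (x y : Fin s → ℝ) : ℝ :=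
  ∏ j, cellIndicator b m (x j) (y j)

variable {b s : ℕ}

lemma exists_boxIndicator_eq_zero (hb : b ≠ 0) {m : ℕ} {ι : Type*} [Fintype ι]
    (hι : Fintype.card ι < (b ^ m) ^ s) (t : ι → Fin s → ℝ) (ht : ∀ i, t i ∈ unitCube s) :
    ∃ x ∈ unitCube s, ∀ i, boxIndicator b m x (t i) = 0 := by
  have hbm : (0 : ℝ) < (b : ℝ) ^ m := by positivity
  let box (i : ι) (j : Fin s) : Fin (b ^ m) :=
    ⟨cellIndex b m (t i j), cellIndex_lt hb m (ht i j trivial)⟩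
  have not_surjective : ¬ Function.Surjective box := fun h =>
    (Fintype.card_le_of_surjective box h).not_gt (by simpa using hι)
  obtain ⟨c, hc⟩ : ∃ c, ∀ i, box i ≠ c := by
    simpa only [Function.Surjective, not_forall, not_exists] using not_surjective
  refine ⟨fun j => (c j : ℕ) / (b : ℝ) ^ m, fun j _ => ⟨by positivity, ?_⟩, fun i => ?_⟩
  · exact (div_lt_one hbm).2 (by exact_mod_cast (c j).2)
  · obtain ⟨j, hj⟩ := Function.ne_iff.1 (hc i)
    refine Finset.prod_eq_zero (Finset.mem_univ j) (if_neg fun h => hj (Fin.ext ?_))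
    exact h.symm.trans (cellIndex_natCast_div hb m (c j))

lemma walshCoeff_boxIndicator (hb : 1 < b) (m : ℕ) {x : Fin s → ℝ} (hx : x ∈ unitCube s)
    (k : Fin s → ℕ) :
    walshCoeff b (boxIndicator b m x) k =
      if ∀ j, k j < b ^ m then (((b : ℂ) ^ m) ^ s)⁻¹ * conj (wal b k x) else 0 := by
  have coeff_eq_prod : walshCoeff b (boxIndicator b m x) k =
      ∏ j, if k j < b ^ m then ((b : ℂ) ^ m)⁻¹ * conj (wal1 b (k j) (x j)) else 0 := by
    rw [← Finset.prod_congr rfl fun j _ =>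
      integral_cellIndicator_mul_conj_wal1 hb m (hx j trivial) (k j)]
    exact walshCoeff_prod b (fun j => cellIndicator b m (x j)) k
  rw [coeff_eq_prod]
  split_ifs with hk
  · simp [hk, wal, Finset.prod_mul_distrib]
  · obtain ⟨j, hj⟩ := not_forall.1 hk
    exact Finset.prod_eq_zero (Finset.mem_univ j) (if_neg hj)

lemma boxIndicator_eq_sum (hb : 1 < b) (m : ℕ) {x y : Fin s → ℝ} (hx : x ∈ unitCube s)
    (hy : y ∈ unitCube s) :
    (boxIndicator b m x y : ℂ) = ∑ k ∈ Fintype.piFinset fun _ : Fin s => Finset.range (b ^ m),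
      walshCoeff b (boxIndicator b m x) k * wal b k y := by
  rw [boxIndicator, Complex.ofReal_prod, Finset.prod_congr rfl fun j _ =>
    cellIndicator_eq_sum hb m (hx j trivial) (hy j trivial), Finset.prod_univ_sum]
  refine Finset.sum_congr rfl fun k hk => ?_
  have hk : ∀ j, k j < b ^ m := by simpa using hk
  rw [walshCoeff_boxIndicator hb m hx, if_pos hk]
  simp [wal, Finset.prod_mul_distrib]

lemma hasSum_walshCoeff_boxIndicator (hb : 1 < b) (m : ℕ) {x y : Fin s → ℝ}
    (hx : x ∈ unitCube s) (hy : y ∈ unitCube s) :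
    HasSum (fun k => walshCoeff b (boxIndicator b m x) k * wal b k y)
      (boxIndicator b m x y : ℂ) := by
  rw [boxIndicator_eq_sum hb m hx hy]
  refine hasSum_sum_of_ne_finset_zero fun k hk => ?_
  rw [walshCoeff_boxIndicator hb m hx, if_neg (by simpa using hk), zero_mul]

lemma intBox_boxIndicator (hb : 1 < b) (m : ℕ) {x : Fin s → ℝ} (hx : x ∈ unitCube s) :
    intBox s (boxIndicator b m x) = (((b : ℝ) ^ m) ^ s)⁻¹ := by
  have hbm : 0 < b ^ m := by positivity
  have coeff_zero := walshCoeff_boxIndicator hb m hx 0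
  simp only [walshCoeff_zero, wal, Pi.zero_apply, hbm, wal1_zero, Finset.prod_const_one, map_one,
    mul_one, implies_true, if_true] at coeff_zero
  exact Complex.ofReal_injective (by rw [coeff_zero]; push_cast; rfl)

variable {m : ℕ} {a : Fin s → ℝ} {D : ℝ}

lemma norm_walshCoeff_boxIndicator_mul_rpow_le (hb : 1 < b)
    (hD : ∀ k : Fin s → ℕ, (∀ j, k j < b ^ m) → dickWtV b a k ≤ D) {x : Fin s → ℝ}
    (hx : x ∈ unitCube s) (k : Fin s → ℕ) :
    ‖walshCoeff b (boxIndicator b m x) k‖ * (b : ℝ) ^ dickWtV b a k ≤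
      (((b : ℝ) ^ m) ^ s)⁻¹ * (b : ℝ) ^ D := by
  rw [walshCoeff_boxIndicator hb m hx]
  split_ifs with hk
  · have hb_one : (1 : ℝ) ≤ b := by exact_mod_cast hb.le
    simp only [norm_mul, norm_inv, norm_pow, Complex.norm_natCast, RCLike.norm_conj, norm_wal hb,
      mul_one]
    gcongr
    exact hD k hk
  · rw [norm_zero, zero_mul]
    positivity

lemma memW_boxIndicator (hb : 1 < b) (m : ℕ) (a : Fin s → ℝ) {x : Fin s → ℝ}
    (hx : x ∈ unitCube s) : MemW b a (boxIndicator b m x) := by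
  obtain ⟨M, hM, haM⟩ := exists_nonneg_forall_le a
  exact ⟨fun _ hy => hasSum_walshCoeff_boxIndicator hb m hx hy, _, Set.forall_mem_range.2
    (norm_walshCoeff_boxIndicator_mul_rpow_le hb
      (fun _ hk => dickWtV_le (by lia) haM hM hk) hx)⟩

lemma normW_boxIndicator_le (hb : 1 < b)
    (hD : ∀ k : Fin s → ℕ, (∀ j, k j < b ^ m) → dickWtV b a k ≤ D) {x : Fin s → ℝ}
    (hx : x ∈ unitCube s) :
    normW b a (boxIndicator b m x) ≤ (((b : ℝ) ^ m) ^ s)⁻¹ * (b : ℝ) ^ D :=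
  ciSup_le (norm_walshCoeff_boxIndicator_mul_rpow_le hb hD hx)

lemma ofReal_rpow_neg_le_minErr (hb : 1 < b) {n : ℕ} (hn : n < (b ^ m) ^ s)
    (hD : ∀ k : Fin s → ℕ, (∀ j, k j < b ^ m) → dickWtV b a k ≤ D) :
    ENNReal.ofReal ((b : ℝ) ^ (-D)) ≤ minErr n s {f | MemW b a f} (normW b a) := by
  have hb_pos : (0 : ℝ) < b := by positivity
  refine ofReal_le_minErr_of_vanishing (fun f hf => by simpa using MemW.smul hf (-1))
    (fun f _ => by simpa using normW_smul b a (-1) f) fun t ht => ?_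
  obtain ⟨x, hx, hxt⟩ := exists_boxIndicator_eq_zero (by lia : b ≠ 0) (by simpa using hn) t ht
  set V : ℝ := ((b : ℝ) ^ m) ^ s
  have hV : 0 < V := by positivity
  rw [Real.rpow_neg hb_pos.le]
  refine ⟨(V * ((b : ℝ) ^ D)⁻¹) • boxIndicator b m x, (memW_boxIndicator hb m a hx).smul _,
    ?_, fun i => by simp [hxt i], ?_⟩
  · rw [normW_smul, abs_of_pos (by positivity)]
    calc V * ((b : ℝ) ^ D)⁻¹ * normW b a (boxIndicator b m x)
        ≤ V * ((b : ℝ) ^ D)⁻¹ * (V⁻¹ * (b : ℝ) ^ D) := by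
          gcongr; exact normW_boxIndicator_le hb hD hx
      _ = 1 := by field_simp
  · rw [intBox_smul, intBox_boxIndicator hb m hx, mul_right_comm, mul_inv_cancel₀ hV.ne', one_mul]

end Boxes

section Decay

lemma nonpos_of_forall_nat_mul_sq_le {α β γ : ℝ} (h : ∀ m : ℕ, α * m ^ 2 ≤ β * m + γ) :
    α ≤ 0 := by
  by_contra! hα
  obtain ⟨m, hm⟩ := exists_nat_ge (max 1 ((|β| + |γ| + 1) / α))
  have hm_one : (1 : ℝ) ≤ m := (le_max_left _ _).trans hm
  have hm_large : |β| + |γ| + 1 ≤ α * m := by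
    rw [← div_le_iff₀' hα]
    exact (le_max_right _ _).trans hm
  have : α * m ^ 2 > β * m + γ :=
    calc α * (m : ℝ) ^ 2 = α * m * m := by ring
      _ ≥ (|β| + |γ| + 1) * m := by gcongr
      _ > |β| * m + |γ| := by nlinarith [abs_nonneg γ]
      _ ≥ β * m + γ := by gcongr <;> exact le_abs_self _
  exact this.not_ge (h m)

variable {b s : ℕ} {a : Fin s → ℝ} {K c : ℝ}

lemma rpow_neg_le_of_minErr_le (hb : 1 < b) (hs : 0 < s) {M : ℝ} (haM : ∀ j, a j ≤ M)
    (hM : 0 ≤ M)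
    (hK : ∀ n : ℕ, 0 < n → minErr n s {f | MemW b a f} (normW b a) ≤
      ENNReal.ofReal (K * Real.exp (-c * Real.log n ^ 2))) (m : ℕ) :
    (b : ℝ) ^ (-(s * ((m + 1) * (m + 1 + M)))) ≤
      K * Real.exp (-c * (m * s * Real.log b) ^ 2) := by
  have hn : b ^ (m * s) < (b ^ (m + 1)) ^ s := by
    rw [← pow_mul]
    exact Nat.pow_lt_pow_right hb (Nat.mul_lt_mul_of_pos_right m.lt_succ_self hs)
  have lower := ofReal_rpow_neg_le_minErr hb hn fun _ hk => dickWtV_le (by lia) haM hM hk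
  have upper := hK (b ^ (m * s)) (by positivity)
  have hpos : 0 < (b : ℝ) ^ (-(s * ((m + 1 : ℕ) * ((m + 1 : ℕ) + M)))) := by positivity
  simpa only [Nat.cast_pow, Real.log_pow, Nat.cast_mul, Nat.cast_succ] using
    (ENNReal.ofReal_le_ofReal_iff' .. |>.1 (lower.trans upper)).resolve_right hpos.not_ge

lemma mul_mul_log_le_one_of_minErr_le (hb : 1 < b) (hs : 0 < s)
    (hK : ∀ n : ℕ, 0 < n → minErr n s {f | MemW b a f} (normW b a) ≤
      ENNReal.ofReal (K * Real.exp (-c * Real.log n ^ 2))) :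
    c * s * Real.log b ≤ 1 := by
  obtain ⟨M, hM, haM⟩ := exists_nonneg_forall_le a
  have bound := rpow_neg_le_of_minErr_le hb hs haM hM hK
  have hb_pos : (0 : ℝ) < b := by positivity
  have hlog : 0 < Real.log b := Real.log_pos (by exact_mod_cast hb)
  have hK_pos : 0 < K := pos_of_mul_pos_left
    ((Real.rpow_pos_of_pos hb_pos _).trans_le (bound 0)) (Real.exp_pos _).le
  have log_bound (m : ℕ) : -(s * ((m + 1) * (m + 1 + M))) * Real.log b ≤
      Real.log K + -c * (m * s * Real.log b) ^ 2 := by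
    have := Real.log_le_log (by positivity) (bound m)
    rwa [Real.log_rpow hb_pos, Real.log_mul hK_pos.ne' (Real.exp_ne_zero _), Real.log_exp] at this
  have hsL : 0 < s * Real.log b := by positivity
  have leading : s * Real.log b * (c * s * Real.log b - 1) ≤ 0 :=
    nonpos_of_forall_nat_mul_sq_le (β := s * Real.log b * (2 + M))
      (γ := Real.log K + s * Real.log b * (1 + M)) fun m => by linarith [log_bound m]
  linarith [nonpos_of_mul_nonpos_right leading hsL]

end Decay

theorem statement1_general (b : ℕ) (hb : 2 ≤ b) (a : ℕ → ℝ) :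
    ¬ ∃ (K : ℕ → ℝ) (c : ℝ), 0 < c ∧
        ∀ s n : ℕ, 0 < s → 0 < n →
          minErr n s {f | MemW b (fun j : Fin s => a j) f} (normW b (fun j : Fin s => a j)) ≤
            ENNReal.ofReal (K s * Real.exp (-c * (Real.log n) ^ 2)) := by
  rintro ⟨K, c, hc, hK⟩
  have hlog : 0 < Real.log b := Real.log_pos (by exact_mod_cast hb)
  obtain ⟨s, hs⟩ := exists_nat_gt (1 / (c * Real.log b))
  have hs_pos : 0 < s := Nat.cast_pos.1 (lt_trans (by positivity) hs)
  have exponent_le := mul_mul_log_le_one_of_minErr_le hb hs_pos fun n => hK s n hs_pos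
  rw [div_lt_iff₀ (by positivity)] at hs
  linarith

/-- there are no constants `A, C, c > 0` such that
`e(n, s, W_{s,a}) ≤ C·exp(A·s)·exp(-c·(log n)²)` for all `s, n ∈ ℕ`. -/
theorem statement1 (b : ℕ) (hb : 2 ≤ b) (a : ℕ → ℝ) (ha : Monotone a) :
    ¬ ∃ A C c : ℝ, 0 < A ∧ 0 < C ∧ 0 < c ∧
        ∀ s n : ℕ, 0 < s → 0 < n →
          minErr n s {f | MemW b (fun j : Fin s => a j) f} (normW b (fun j : Fin s => a j)) ≤
            ENNReal.ofReal (C * Real.exp (A * s) * Real.exp (-c * (Real.log n) ^ 2)) := by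
  rintro ⟨A, C, c, -, -, hc, H⟩
  exact statement1_general b hb a ⟨fun s => C * Real.exp (A * s), c, hc, H⟩

end
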